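/- For all positive integers p ≥ q ≥ 2t + 1 (with t ≥ 1), the anti-Ramsey number of t edge-disjoint rainbow spanning trees in the complete bipartite graph K_{p,q} equals (p-2)q + t + δ_{pq}, where δ_{pq} = 1 if p = q and 0 otherwise. -/

import Mathlib

open Finset
open scoped Classical

/-- The set of non-crossing edges of `G` with respect to a partition `P` of the
vertex set: edges whose two endpoints lie in the same part of `P`. -/
noncomputable def edgesNonCrossing {V : Type} [Fintype V] (G : SimpleGraph V)
    (P : Finpartition (Finset.univ : Finset V)) : Finset (Sym2 V) :=
  G.edgeFinset.filter (fun e => ∃ p ∈ P.parts, ∀ v ∈ e, v ∈ p)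

/-- The set of crossing edges of `G` with respect to a partition `P` of the
vertex set: edges whose endpoints lie in different parts of `P`. -/
noncomputable def edgesCrossing {V : Type} [Fintype V] (G : SimpleGraph V)
    (P : Finpartition (Finset.univ : Finset V)) : Finset (Sym2 V) :=
  G.edgeFinset.filter (fun e => ¬ ∃ p ∈ P.parts, ∀ v ∈ e, v ∈ p)

/-- `G`, edge-colored by `c`, contains `t` pairwise edge-disjoint rainbow
spanning trees. -/
def HasRainbowSpanningTrees {V : Type} [Fintype V] (G : SimpleGraph V)
    (c : Sym2 V → ℕ) (t : ℕ) : Prop :=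
  ∃ T : Fin t → SimpleGraph V,
    (∀ i, T i ≤ G) ∧ (∀ i, (T i).IsTree) ∧
    (∀ i, Set.InjOn c ((T i).edgeSet)) ∧
    (∀ i j, i ≠ j → Disjoint ((T i).edgeSet) ((T j).edgeSet))

/-- The anti-Ramsey number `r(G,t)`: the maximum number of colors in an
edge-coloring of `G` containing no `t` pairwise edge-disjoint rainbow spanning
trees. -/
noncomputable def antiRamsey {V : Type} [Fintype V] (G : SimpleGraph V) (t : ℕ) : ℕ :=
  sSup {m | ∃ c : Sym2 V → ℕ, (G.edgeFinset.image c).card = m ∧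
    ¬ HasRainbowSpanningTrees G c t}

/-- `max_{P : |P| ≥ 3} { |E(P,G)| + t(|P|-2) }`. -/
noncomputable def maxNonCross3 {V : Type} [Fintype V] (G : SimpleGraph V) (t : ℕ) : ℕ :=
  sSup {m | ∃ P : Finpartition (Finset.univ : Finset V), 3 ≤ P.parts.card ∧
    m = (edgesNonCrossing G P).card + t * (P.parts.card - 2)}

/-- `f_G(s)`: the maximum of `|E(P,G)|` over partitions of the vertex set into
exactly `s` parts. -/
noncomputable def fMax {V : Type} [Fintype V] (G : SimpleGraph V) (s : ℕ) : ℕ :=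
  sSup {m | ∃ P : Finpartition (Finset.univ : Finset V), P.parts.card = s ∧
    m = (edgesNonCrossing G P).card}

/-- The number of edges of `G` induced by a set `p` of vertices. -/
noncomputable def edgesWithin {V : Type} [Fintype V] (G : SimpleGraph V) (p : Finset V) : ℕ :=
  (G.edgeFinset.filter (fun e => ∀ v ∈ e, v ∈ p)).card

/-- One splitting step: remove a single vertex from a currently largest part
(measured by the number of non-crossing edges it induces) to form a new
singleton part. -/
def SplitStep {V : Type} [Fintype V] (G : SimpleGraph V)
    (P Q : Finpartition (Finset.univ : Finset V)) : Prop :=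
  ∃ p ∈ P.parts, (∀ q ∈ P.parts, edgesWithin G q ≤ edgesWithin G p) ∧
    ∃ v ∈ p, p.erase v ≠ ∅ ∧
      Q.parts = insert {v} (insert (p.erase v) (P.parts.erase p))

/-!
A vertex partition is a setoid, finer partitions lying below, and its number of classes `n` is a
supermodular function. A lattice form of Rado's theorem on independent transversals, applied to the
`t`-th power of the partition lattice, shows: if the edges of `H` stay inside the classes of `σ`,
and every `Q ≤ σ` is crossed by edges of `H` in at least `t (n Q - n σ)` colours, then `H` contains
`t` edge-disjoint rainbow subgraphs, each of which connects every class of `σ`.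

For the upper bound, choose a set `W` of at most two vertices maximising `t |W|` minus the number
of colours at `W`, delete these colours, and let `σ` isolate the vertices of `W`. The choice of `W`
is the colour condition for the partitions isolating at most two vertices; for every other `Q` it
follows by counting the edges of `K_{p,q}` inside the classes of `Q`. The deleted colours then
re-attach the vertices of `W` to each of the `t` subgraphs, by Hall's theorem.

For the lower bound, isolate two vertices, give all edges avoiding them distinct colours, use
`t - 1` further colours once each on edges at the two vertices, and one last colour on the rest.
Every rainbow spanning tree then uses one of the `t - 1` special edges.
-/

section LatticeRado

variable {ι α L : Type*} [DecidableEq α] [Lattice L]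

theorem exists_le_of_erase_violates {g : ι → L} {κ : ι → α} {r : L → ℕ} {s : L} {d : ℕ}
    {X : Finset ι} {x y : ι}
    (hX : ∀ a ≤ s, r a ≤ #((X.filter fun z ↦ ¬ g z ≤ a).image κ) + d)
    (hy : y ∈ X) (hxy : y ≠ x) (hκ : κ x = κ y)
    (hx : ¬ ∀ a ≤ s, r a ≤ #(((X.erase x).filter fun z ↦ ¬ g z ≤ a).image κ) + d) :
    ∃ a ≤ s, #(((X.erase x).filter fun z ↦ ¬ g z ≤ a).image κ) + d < r a ∧ g y ≤ a := by
  push Not at hx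
  obtain ⟨a, has, ha⟩ := hx
  refine ⟨a, has, ha, ?_⟩
  by_contra hya
  refine (ha.trans_le (hX a has)).not_ge (Nat.add_le_add_right (card_le_card ?_) d)
  intro k hk
  obtain ⟨z, hz, rfl⟩ := mem_image.1 hk
  rw [mem_filter] at hz
  by_cases hzx : z = x
  · exact mem_image.2 ⟨y, by simp [hy, hxy, hya], by rw [hzx, hκ]⟩
  · exact mem_image_of_mem κ (by simp [hz, hzx])

theorem image_filter_not_le_sup_subset {g : ι → L} {κ : ι → α} {X : Finset ι} {x y : ι} {a b : L}
    (hxb : g x ≤ b) (hya : g y ≤ a) :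
    (X.filter fun z ↦ ¬ g z ≤ a ⊔ b).image κ ⊆
      ((X.erase x).filter fun z ↦ ¬ g z ≤ a).image κ ∩
        ((X.erase y).filter fun z ↦ ¬ g z ≤ b).image κ := by
  intro k hk
  obtain ⟨z, hz, rfl⟩ := mem_image.1 hk
  rw [mem_filter] at hz
  have hza : ¬ g z ≤ a := fun h ↦ hz.2 (le_sup_of_le_left h)
  have hzb : ¬ g z ≤ b := fun h ↦ hz.2 (le_sup_of_le_right h)
  have hzx : z ≠ x := by rintro rfl; exact hzb hxb
  have hzy : z ≠ y := by rintro rfl; exact hza hya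
  exact mem_inter.2 ⟨mem_image_of_mem κ (by simp [hz.1, hza, hzx]),
    mem_image_of_mem κ (by simp [hz.1, hzb, hzy])⟩

theorem image_filter_not_le_inf_subset {g : ι → L} {κ : ι → α} {X : Finset ι} {x y : ι}
    (hκ : κ x = κ y) (a b : L) :
    (X.filter fun z ↦ ¬ g z ≤ a ⊓ b).image κ ⊆
      insert (κ x) (((X.erase x).filter fun z ↦ ¬ g z ≤ a).image κ ∪
        ((X.erase y).filter fun z ↦ ¬ g z ≤ b).image κ) := by
  intro k hk
  obtain ⟨z, hz, rfl⟩ := mem_image.1 hk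
  simp only [mem_filter, le_inf_iff, not_and_or] at hz
  by_cases hzκ : κ z = κ x
  · exact mem_insert.2 (Or.inl hzκ)
  have hzx : z ≠ x := by rintro rfl; exact hzκ rfl
  have hzy : z ≠ y := by rintro rfl; exact hzκ hκ.symm
  refine mem_insert_of_mem (mem_union.2 (hz.2.imp ?_ ?_)) <;> intro h <;>
    exact mem_image_of_mem κ (by simp [hz.1, h, hzx, hzy])

theorem exists_subset_injOn_of_supermodular {g : ι → L} {κ : ι → α} {r : L → ℕ} {s : L} {d : ℕ}
    (hr : ∀ a b, r a + r b ≤ r (a ⊔ b) + r (a ⊓ b)) (X : Finset ι)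
    (hX : ∀ a ≤ s, r a ≤ #((X.filter fun z ↦ ¬ g z ≤ a).image κ) + d) :
    ∃ Y ⊆ X, Set.InjOn κ Y ∧ ∀ a ≤ s, r a ≤ #((Y.filter fun z ↦ ¬ g z ≤ a).image κ) + d := by
  induction X using Finset.strongInduction with
  | H X ih =>
    by_cases hinj : Set.InjOn κ X
    · exact ⟨X, Subset.rfl, hinj, hX⟩
    simp only [Set.InjOn, mem_coe] at hinj
    push Not at hinj
    obtain ⟨x, hx, y, hy, hκ, hxy⟩ := hinj
    by_contra hne
    have herase : ∀ z ∈ X,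
        ¬ ∀ a ≤ s, r a ≤ #(((X.erase z).filter fun z ↦ ¬ g z ≤ a).image κ) + d := by
      intro z hz h
      obtain ⟨Y, hYX, hY⟩ := ih _ (erase_ssubset hz) h
      exact hne ⟨Y, hYX.trans (erase_subset z X), hY⟩
    obtain ⟨a, has, ha, hya⟩ := exists_le_of_erase_violates hX hy (Ne.symm hxy) hκ (herase x hx)
    obtain ⟨b, hbs, hb, hxb⟩ := exists_le_of_erase_violates hX hx hxy hκ.symm (herase y hy)
    -- Uncrossing: `a` and `b` together lack two colours, `a ⊔ b` and `a ⊓ b` regain at most one.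
    have hsup := card_le_card (image_filter_not_le_sup_subset (X := X) (κ := κ) hxb hya)
    have hinf := (card_le_card (image_filter_not_le_inf_subset (g := g) (X := X) hκ a b)).trans
      (card_insert_le _ _)
    have hXsup := (hX _ (sup_le has hbs)).trans (Nat.add_le_add_right hsup d)
    have hXinf := (hX _ (inf_le_left.trans has)).trans (Nat.add_le_add_right hinf d)
    have hcard := card_inter_add_card_union
      (((X.erase x).filter fun z ↦ ¬ g z ≤ a).image κ)
      (((X.erase y).filter fun z ↦ ¬ g z ≤ b).image κ)
    have hsuper := hr a b
    omega

end LatticeRado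

theorem card_quotient_add_le {V : Type*} [Finite V] (P Q : Setoid V) :
    Nat.card (Quotient P) + Nat.card (Quotient Q) ≤
      Nat.card (Quotient (P ⊔ Q)) + Nat.card (Quotient (P ⊓ Q)) := by
  have := Fintype.ofFinite V
  -- Dimension count: `F R` consists of the functions constant on the classes of `R`.
  let F (R : Setoid V) := LinearMap.range (LinearMap.funLeft ℚ ℚ (Quotient.mk R))
  have mem_F (R : Setoid V) (f : V → ℚ) : f ∈ F R ↔ R ≤ Setoid.ker f := by
    constructor
    · rintro ⟨f, rfl⟩ x y hxy
      exact congrArg f (Quotient.sound hxy)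
    · exact fun h ↦ ⟨Quotient.lift f fun x y hxy ↦ h hxy, rfl⟩
  have finrank_F (R : Setoid V) : Module.finrank ℚ (F R) = Nat.card (Quotient R) := by
    rw [LinearMap.finrank_range_of_inj
      (LinearMap.funLeft_injective_of_surjective ℚ ℚ _ Quotient.mk_surjective),
      Module.finrank_fintype_fun_eq_card, Nat.card_eq_fintype_card]
  have hsup : F P ⊓ F Q = F (P ⊔ Q) := by
    ext f
    simp only [Submodule.mem_inf, mem_F, sup_le_iff]
  have hinf : F P ⊔ F Q ≤ F (P ⊓ Q) :=
    sup_le (fun f hf ↦ (mem_F _ f).2 (inf_le_left.trans ((mem_F P f).1 hf)))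
      (fun f hf ↦ (mem_F _ f).2 (inf_le_right.trans ((mem_F Q f).1 hf)))
  rw [← finrank_F P, ← finrank_F Q, ← Submodule.finrank_sup_add_finrank_inf_eq, hsup, ← finrank_F,
    ← finrank_F, add_comm]
  exact Nat.add_le_add_left (Submodule.finrank_mono hinf) _

theorem card_quotient_anti {V : Type*} [Finite V] {P Q : Setoid V} (h : P ≤ Q) :
    Nat.card (Quotient Q) ≤ Nat.card (Quotient P) :=
  Nat.card_le_card_of_surjective (Quotient.map id fun _ _ hxy ↦ h hxy)
    (Quotient.ind fun x ↦ ⟨⟦x⟧, rfl⟩)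

theorem eq_of_le_of_card_quotient_le {V : Type*} [Finite V] {P Q : Setoid V} (h : P ≤ Q)
    (hcard : Nat.card (Quotient P) ≤ Nat.card (Quotient Q)) : P = Q := by
  let f : Quotient P → Quotient Q := Quotient.map id fun _ _ hxy ↦ h hxy
  have hf : Function.Surjective f := Quotient.ind fun x ↦ ⟨⟦x⟧, rfl⟩
  have hf' : Function.Injective f :=
    ((Nat.bijective_iff_surjective_and_card f).2
      ⟨hf, hcard.antisymm (card_quotient_anti h)⟩).injective
  exact h.antisymm fun x y hxy ↦ Quotient.exact (hf' (Quotient.sound hxy : f ⟦x⟧ = f ⟦y⟧))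

section Crossing

variable {V : Type*}

/-- The unordered pair `e` joins two different classes of `Q`. Vertex partitions are encoded as
setoids, so that they form a lattice with the finer partition below. -/
def Crosses (Q : Setoid V) (e : Sym2 V) : Prop :=
  ∃ u ∈ e, ∃ v ∈ e, ¬ Q u v

theorem crosses_mk {Q : Setoid V} {u v : V} : Crosses Q s(u, v) ↔ ¬ Q u v := by
  constructor
  · rintro ⟨a, ha, b, hb, hab⟩ huv
    rcases Sym2.mem_iff.1 ha with rfl | rfl <;> rcases Sym2.mem_iff.1 hb with rfl | rfl
    exacts [hab (Q.refl _), hab huv, hab (Q.symm huv), hab (Q.refl _)]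
  · exact fun h ↦ ⟨u, Sym2.mem_mk_left u v, v, Sym2.mem_mk_right u v, h⟩

theorem reachableSetoid_le_iff {G : SimpleGraph V} {Q : Setoid V} :
    G.reachableSetoid ≤ Q ↔ ∀ e ∈ G.edgeSet, ¬ Crosses Q e := by
  constructor
  · rintro h ⟨u, v⟩ he hcross
    exact crosses_mk.1 hcross (h (SimpleGraph.Adj.reachable he))
  · rintro h u v ⟨w⟩
    induction w with
    | nil => exact Q.refl _
    | cons hadj _ ih => exact Q.trans (not_not.1 fun hn ↦ h _ hadj (crosses_mk.2 hn)) ih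

theorem reachableSetoid_mono {G H : SimpleGraph V} (h : G ≤ H) :
    G.reachableSetoid ≤ H.reachableSetoid :=
  Setoid.le_def.2 (SimpleGraph.Reachable.mono h)

theorem reachableSetoid_fromEdgeSet_singleton_le_iff {e : Sym2 V} {Q : Setoid V} :
    (SimpleGraph.fromEdgeSet {e}).reachableSetoid ≤ Q ↔ ¬ Crosses Q e := by
  rw [reachableSetoid_le_iff, SimpleGraph.edgeSet_fromEdgeSet]
  refine ⟨fun h hcross ↦ ?_, fun h e' he' ↦ he'.1 ▸ h⟩
  refine h e ⟨rfl, ?_⟩ hcross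
  induction e with
  | h u v =>
    rintro (rfl : u = v)
    exact crosses_mk.1 hcross (Q.refl u)

end Crossing

section Packing

variable {V α : Type*}

/-- The colours under `c` of the edges of `G` joining different classes of `Q`. -/
noncomputable def crossingColors [Fintype V] [DecidableEq α] (G : SimpleGraph V)
    (c : Sym2 V → α) (Q : Setoid V) : Finset α :=
  (G.edgeFinset.filter (Crosses Q)).image c

/-- A family of pairwise edge-disjoint graphs, each of them rainbow under the colouring `c`. -/
def IsRainbowPacking {ι : Type*} (c : Sym2 V → α) (F : ι → SimpleGraph V) : Prop :=
  (∀ i, Set.InjOn c (F i).edgeSet) ∧ ∀ i j, i ≠ j → Disjoint (F i).edgeSet (F j).edgeSet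

theorem IsRainbowPacking.sup {ι : Type*} {c : Sym2 V → α} {F X : ι → SimpleGraph V}
    (hF : IsRainbowPacking c F) (hX : IsRainbowPacking c X)
    (hFX : ∀ i j, ∀ e ∈ (F i).edgeSet, ∀ e' ∈ (X j).edgeSet, c e ≠ c e') :
    IsRainbowPacking c (F ⊔ X) := by
  have hdisj (i j : ι) : Disjoint (F i).edgeSet (X j).edgeSet :=
    Set.disjoint_left.2 fun e he he' ↦ hFX i j e he e he' rfl
  constructor
  · intro i
    rw [Pi.sup_apply, SimpleGraph.edgeSet_sup, Set.injOn_union (hdisj i i)]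
    exact ⟨hF.1 i, hX.1 i, hFX i i⟩
  · intro i j hij
    simp only [Pi.sup_apply, SimpleGraph.edgeSet_sup, Set.disjoint_union_left,
      Set.disjoint_union_right]
    exact ⟨⟨hF.2 i j hij, (hdisj j i).symm⟩, hdisj i j, hX.2 i j hij⟩

theorem isRainbowPacking_fromEdgeSet {ι : Type*} {c : Sym2 V → α} {Y : Finset (Sym2 V × ι)}
    (hY : Set.InjOn (c ∘ Prod.fst) (Y : Set (Sym2 V × ι))) :
    IsRainbowPacking c fun i ↦ SimpleGraph.fromEdgeSet {e | (e, i) ∈ Y} := by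
  simp only [IsRainbowPacking, SimpleGraph.edgeSet_fromEdgeSet]
  constructor
  · rintro i e he e' he' hc
    exact congrArg Prod.fst (hY he.1 he'.1 hc)
  · refine fun i j hij ↦ Set.disjoint_left.2 fun e he he' ↦ hij ?_
    exact congrArg Prod.snd (hY he.1 he'.1 rfl)

variable [Fintype V] [DecidableEq α]

theorem sum_card_quotient_le {H : SimpleGraph V} {c : Sym2 V → α} {σ : Setoid V} {t : ℕ}
    (hH : H.reachableSetoid ≤ σ)
    (hcond : ∀ Q ≤ σ, t * Nat.card (Quotient Q) ≤
      #(crossingColors H c Q) + t * Nat.card (Quotient σ))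
    {P : Fin t → Setoid V} :
    ∑ i, Nat.card (Quotient (P i)) ≤
      #(((H.edgeFinset ×ˢ univ).filter fun z ↦ Crosses (P z.2) z.1).image (c ∘ Prod.fst)) +
        t * Nat.card (Quotient σ) := by
  have hsum : ∑ i, Nat.card (Quotient (P i)) ≤ t * Nat.card (Quotient (σ ⊓ ⨅ i, P i)) := by
    simpa using sum_le_card_nsmul univ _ _ fun i _ ↦
      card_quotient_anti (inf_le_right.trans (iInf_le P i) : σ ⊓ ⨅ i, P i ≤ P i)
  refine (hsum.trans (hcond _ inf_le_left)).trans (Nat.add_le_add_right (card_le_card ?_) _)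
  intro k hk
  obtain ⟨e, he, rfl⟩ := mem_image.1 hk
  obtain ⟨heH, u, hu, v, hv, huv⟩ := mem_filter.1 he
  have hσ : σ u v := by
    by_contra h
    exact reachableSetoid_le_iff.1 hH e (SimpleGraph.mem_edgeFinset.1 heH) ⟨u, hu, v, hv, h⟩
  obtain ⟨i, hi⟩ : ∃ i, ¬ P i u v := by
    by_contra! h
    exact huv ⟨hσ, Setoid.sInf_iff.2 (Set.forall_mem_range.2 h)⟩
  exact mem_image_of_mem (c ∘ Prod.fst) (a := (e, i))
    (mem_filter.2 ⟨mem_product.2 ⟨heH, mem_univ i⟩, u, hu, v, hv, hi⟩)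

theorem exists_subset_injOn_of_le_crossingColors {H : SimpleGraph V} {c : Sym2 V → α}
    {σ : Setoid V} {t : ℕ} (hH : H.reachableSetoid ≤ σ)
    (hcond : ∀ Q ≤ σ, t * Nat.card (Quotient Q) ≤
      #(crossingColors H c Q) + t * Nat.card (Quotient σ)) :
    ∃ Y : Finset (Sym2 V × Fin t), (∀ z ∈ Y, z.1 ∈ H.edgeSet) ∧
      Set.InjOn (c ∘ Prod.fst) (Y : Set (Sym2 V × Fin t)) ∧
      ∀ P : Fin t → Setoid V, (∀ i, P i ≤ σ) → ∑ i, Nat.card (Quotient (P i)) ≤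
        #((Y.filter fun z ↦ Crosses (P z.2) z.1).image (c ∘ Prod.fst)) +
          t * Nat.card (Quotient σ) := by
  let g (z : Sym2 V × Fin t) : Fin t → Setoid V :=
    Function.update ⊥ z.2 (SimpleGraph.fromEdgeSet {z.1}).reachableSetoid
  have hg (z : Sym2 V × Fin t) (P : Fin t → Setoid V) : ¬ g z ≤ P ↔ Crosses (P z.2) z.1 := by
    simp [g, update_le_iff, reachableSetoid_fromEdgeSet_singleton_le_iff]
  obtain ⟨Y, hYX, hYinj, hY⟩ := exists_subset_injOn_of_supermodular
    (g := g) (κ := c ∘ Prod.fst) (r := fun P ↦ ∑ i, Nat.card (Quotient (P i))) (s := fun _ ↦ σ)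
    (fun P Q ↦ by
      simp only [← sum_add_distrib]
      exact sum_le_sum fun i _ ↦ card_quotient_add_le (P i) (Q i))
    (H.edgeFinset ×ˢ univ) (fun P _ ↦ by simpa only [hg] using sum_card_quotient_le hH hcond)
  simp only [hg] at hY
  exact ⟨Y, fun z hz ↦ SimpleGraph.mem_edgeFinset.1 (mem_product.1 (hYX hz)).1, hYinj, hY⟩

theorem exists_isRainbowPacking_of_le_crossingColors {H : SimpleGraph V} {c : Sym2 V → α}
    {σ : Setoid V} {t : ℕ} (hH : H.reachableSetoid ≤ σ)
    (hcond : ∀ Q ≤ σ, t * Nat.card (Quotient Q) ≤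
      #(crossingColors H c Q) + t * Nat.card (Quotient σ)) :
    ∃ F : Fin t → SimpleGraph V, (∀ i, F i ≤ H) ∧ IsRainbowPacking c F ∧
      ∀ i, σ ≤ (F i).reachableSetoid := by
  obtain ⟨Y, hYH, hYinj, hY⟩ := exists_subset_injOn_of_le_crossingColors hH hcond
  let F (i : Fin t) := SimpleGraph.fromEdgeSet {e | (e, i) ∈ Y}
  have hFH (i : Fin t) : F i ≤ H := by
    rw [SimpleGraph.fromEdgeSet_le]
    exact fun e he ↦ hYH _ he.1
  have hFσ (i : Fin t) : (F i).reachableSetoid ≤ σ := le_trans (reachableSetoid_mono (hFH i)) hH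
  refine ⟨F, hFH, isRainbowPacking_fromEdgeSet hYinj, fun i ↦ ?_⟩
  -- No edge of the packing crosses the family below, so its demand must be trivial.
  let P := Function.update (fun _ ↦ σ) i ((F i).reachableSetoid ⊓ σ)
  have hPi : P i = (F i).reachableSetoid ⊓ σ := Function.update_self ..
  have hPne {j : Fin t} (hj : j ≠ i) : P j = σ := Function.update_of_ne hj ..
  have hP (j : Fin t) : P j ≤ σ := by
    obtain rfl | hj := eq_or_ne j i
    exacts [hPi.trans_le inf_le_right, (hPne hj).le]
  have hFP (j : Fin t) : (F j).reachableSetoid ≤ P j := by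
    obtain rfl | hj := eq_or_ne j i
    exacts [hPi ▸ le_inf le_rfl (hFσ j), hPne hj ▸ hFσ j]
  have hnone : ∀ z ∈ Y, ¬ Crosses (P z.2) z.1 := by
    refine fun z hz ↦ reachableSetoid_le_iff.1 (hFP z.2) z.1 ?_
    rw [SimpleGraph.edgeSet_fromEdgeSet]
    exact ⟨hz, H.not_isDiag_of_mem_edgeSet (hYH z hz)⟩
  have hcard := hY P hP
  rw [filter_false_of_mem hnone, image_empty, card_empty, zero_add] at hcard
  have heq : P i = σ := by
    refine eq_of_le_of_card_quotient_le (hP i) (not_lt.1 fun hlt ↦ hcard.not_gt ?_)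
    simpa using sum_lt_sum (fun j _ ↦ card_quotient_anti (hP j)) ⟨i, mem_univ i, hlt⟩
  exact heq.symm.le.trans (hPi.le.trans inf_le_left)

end Packing

section Matching

variable {ε α : Type*} [DecidableEq ε] [DecidableEq α] {c : ε → α} {X Y : Finset ε} {n : ℕ}

theorem exists_subset_card_eq_of_lt_card_image (hX : n ≤ #X) (hY : Y.Nonempty)
    (hc : n < #((X ∪ Y).image c)) : ∃ X' ⊆ X, #X' = n ∧ n < #((X' ∪ Y).image c) := by
  obtain ⟨S, hSX, hSinj, hS⟩ := exists_subset_injOn_image_eq_of_surjOn (f := c) X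
    (X.image c \ Y.image c) (by
      intro k hk
      simpa using mem_image.1 (mem_sdiff.1 (mem_coe.1 hk)).1)
  obtain hSn | hSn := le_total #S n
  · obtain ⟨X', hSX', hX'X, hcard⟩ := exists_subsuperset_card_eq hSX hSn hX
    refine ⟨X', hX'X, hcard, hc.trans_le (card_le_card ?_)⟩
    rw [image_union, ← sdiff_union_self_eq_union, ← hS, ← image_union]
    exact image_subset_image (union_subset_union_left hSX')
  · obtain ⟨X', hX'S, hcard⟩ := exists_subset_card_eq hSn
    refine ⟨X', hX'S.trans hSX, hcard, ?_⟩
    have hdisj : Disjoint (X'.image c) (Y.image c) :=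
      disjoint_sdiff.symm.mono_left (hS ▸ image_subset_image hX'S)
    rw [image_union, card_union_of_disjoint hdisj, card_image_of_injOn (hSinj.mono hX'S), hcard]
    exact Nat.lt_add_of_pos_right (hY.image c).card_pos

theorem card_filter_eq_add_card_filter_eq_le (hXY : Disjoint X Y) (hcard : #X = #Y)
    (hc : #X < #((X ∪ Y).image c)) (k : α) :
    #(X.filter (c · = k)) + #(Y.filter (c · = k)) ≤ #Y := by
  have himage : (X ∪ Y).image c ⊆ insert k (((X ∪ Y).filter (¬ c · = k)).image c) := by
    intro l hl
    obtain ⟨x, hx, rfl⟩ := mem_image.1 hl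
    by_cases hxk : c x = k
    · exact mem_insert.2 (Or.inl hxk)
    · exact mem_insert_of_mem (mem_image_of_mem c (mem_filter.2 ⟨hx, hxk⟩))
  have hle := (card_le_card himage).trans (card_insert_le _ _)
  have himage_le := card_image_le (s := (X ∪ Y).filter (¬ c · = k)) (f := c)
  have hsplit := card_filter_add_card_filter_not (s := X ∪ Y) (c · = k)
  rw [card_union_of_disjoint hXY, filter_union,
    card_union_of_disjoint (disjoint_filter_filter hXY)] at hsplit
  omega

theorem exists_injective_color_ne (hXY : Disjoint X Y) (hcard : #X = #Y)
    (hc : #X < #((X ∪ Y).image c)) :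
    ∃ f : X → ε, Function.Injective f ∧ ∀ x, f x ∈ Y ∧ c x ≠ c (f x) := by
  suffices hall : ∀ A : Finset X, #A ≤ #(A.biUnion fun x ↦ Y.filter (c · ≠ c x)) by
    obtain ⟨f, hf, hfY⟩ := (all_card_le_biUnion_card_iff_exists_injective _).1 hall
    exact ⟨f, hf, fun x ↦ ⟨(mem_filter.1 (hfY x)).1, (mem_filter.1 (hfY x)).2.symm⟩⟩
  intro A
  obtain rfl | ⟨a, ha⟩ := A.eq_empty_or_nonempty
  · simp
  by_cases hmono : ∀ b ∈ A, c b = c a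
  · have hA : A.map (Function.Embedding.subtype _) ⊆ X.filter (c · = c a) := by
      intro x hx
      obtain ⟨b, hb, rfl⟩ := mem_map.1 hx
      exact mem_filter.2 ⟨b.2, hmono b hb⟩
    have hAcard := card_le_card hA
    rw [card_map] at hAcard
    have hnbr := card_le_card (subset_biUnion_of_mem (fun x : X ↦ Y.filter (c · ≠ c x)) ha)
    have hclass := card_filter_eq_add_card_filter_eq_le hXY hcard hc (c a)
    have hsplit := card_filter_add_card_filter_not (s := Y) (c · = c a)
    simp only [ne_eq] at hnbr ⊢
    omega
  · push Not at hmono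
    obtain ⟨b, hb, hba⟩ := hmono
    have hY : Y ⊆ A.biUnion fun x ↦ Y.filter (c · ≠ c x) := by
      intro y hy
      by_cases hya : c y = c a
      · exact mem_biUnion.2 ⟨b, hb, mem_filter.2 ⟨hy, fun h ↦ hba (h.symm.trans hya)⟩⟩
      · exact mem_biUnion.2 ⟨a, ha, mem_filter.2 ⟨hy, hya⟩⟩
    calc #A ≤ #X := by simpa using card_le_univ A
      _ = #Y := hcard
      _ ≤ _ := card_le_card hY

theorem exists_injective_pair_color_ne (hXY : Disjoint X Y) (hn : 0 < n) (hX : n ≤ #X)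
    (hY : n ≤ #Y) (hc : n < #((X ∪ Y).image c)) :
    ∃ e f : Fin n → ε, Function.Injective e ∧ Function.Injective f ∧
      (∀ i, e i ∈ X) ∧ (∀ i, f i ∈ Y) ∧ ∀ i, c (e i) ≠ c (f i) := by
  obtain ⟨X', hX'X, hX'n, hc₁⟩ :=
    exists_subset_card_eq_of_lt_card_image hX (card_pos.1 (hn.trans_le hY)) hc
  rw [union_comm] at hc₁
  obtain ⟨Y', hY'Y, hY'n, hc₂⟩ :=
    exists_subset_card_eq_of_lt_card_image hY (card_pos.1 (hn.trans_le hX'n.ge)) hc₁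
  rw [union_comm] at hc₂
  obtain ⟨f, hf, hfY⟩ := exists_injective_color_ne (hXY.mono hX'X hY'Y) (hX'n.trans hY'n.symm)
    (hX'n.trans_lt hc₂)
  let φ := (X'.equivFinOfCardEq hX'n).symm
  exact ⟨fun i ↦ φ i, f ∘ φ, Subtype.val_injective.comp φ.injective, hf.comp φ.injective,
    fun i ↦ hX'X (φ i).2, fun i ↦ hY'Y (hfY (φ i)).1, fun i ↦ (hfY (φ i)).2⟩

end Matching

section Isolate

variable {V : Type*}

/-- The partition of `V` into the singletons of `W` and the block `Wᶜ`. -/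
noncomputable def isolate (W : Finset V) : Setoid V :=
  Setoid.ker fun x ↦ if x ∈ W then some x else none

theorem isolate_apply {W : Finset V} {x y : V} : isolate W x y ↔ x = y ∨ x ∉ W ∧ y ∉ W := by
  rw [isolate, Setoid.ker_def]
  split_ifs <;> grind

theorem isolate_empty : isolate (∅ : Finset V) = ⊤ :=
  Setoid.eq_top_iff.2 fun _ _ ↦ isolate_apply.2 (by simp)

theorem isolate_le_of_insert_le {W : Finset V} {u : V} {e : Sym2 V} {R : Setoid V}
    (hR : isolate (insert u W) ≤ R) (he : ¬ e.IsDiag) (hu : u ∈ e) (heW : ∀ v ∈ W, v ∉ e)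
    (heR : ¬ Crosses R e) : isolate W ≤ R := by
  obtain ⟨w, rfl⟩ := hu
  have huw : u ≠ w := he
  have hwW : w ∉ W := fun h ↦ heW w h (Sym2.mem_mk_right u w)
  have hw : ∀ z ∉ W, R z w := by
    intro z hz
    obtain rfl | hzu := eq_or_ne z u
    · exact not_not.1 fun h ↦ heR (crosses_mk.2 h)
    · exact hR (isolate_apply.2 (Or.inr (by simp [hz, hwW, hzu, huw.symm])))
  intro x y hxy
  obtain rfl | ⟨hx, hy⟩ := isolate_apply.1 hxy
  exacts [R.refl x, R.trans (hw x hx) (R.symm (hw y hy))]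

theorem crosses_isolate_iff {W : Finset V} {e : Sym2 V} (he : ¬ e.IsDiag) :
    Crosses (isolate W) e ↔ ∃ v ∈ W, v ∈ e := by
  induction e with
  | h u v =>
    have huv : u ≠ v := he
    simp only [crosses_mk, isolate_apply, Sym2.mem_iff]
    grind

theorem card_quotient_isolate [Fintype V] {W : Finset V} (hW : W ≠ univ) :
    Nat.card (Quotient (isolate W)) = #W + 1 := by
  have hrange : Set.range (fun x ↦ if x ∈ W then some x else none) =
      ((insertNone W : Finset (Option V)) : Set (Option V)) := by
    obtain ⟨z, hz⟩ : ∃ z, z ∉ W := by simpa [eq_univ_iff_forall] using hW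
    ext (_ | x)
    · simpa using ⟨z, hz⟩
    · simp only [Set.mem_range, mem_coe, some_mem_insertNone]
      exact ⟨by rintro ⟨y, hy⟩; grind, fun hx ↦ ⟨x, if_pos hx⟩⟩
  rw [isolate, Nat.card_congr (Setoid.quotientKerEquivRange _), hrange, Nat.card_coe_set_eq,
    Set.ncard_coe_finset, card_insertNone]

end Isolate

section Attachment

variable {V α : Type*} {G X : SimpleGraph V} {c : Sym2 V → α} {W : Finset V} {t : ℕ}

/-- The subgraph `X` of `G` only has edges meeting `W`, and together with any connected graph on
`Wᶜ` it connects all vertices. -/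
def IsAttachment (G : SimpleGraph V) (W : Finset V) (X : SimpleGraph V) : Prop :=
  X ≤ G ∧ (∀ e ∈ X.edgeSet, ∃ v ∈ W, v ∈ e) ∧ isolate W ⊔ X.reachableSetoid = ⊤

theorem isAttachment_empty : IsAttachment G ∅ ⊥ :=
  ⟨bot_le, by simp, by rw [isolate_empty, top_sup_eq]⟩

theorem IsAttachment.insert {u : V} {e : Sym2 V} (hX : IsAttachment G W X) (he : e ∈ G.edgeSet)
    (hu : u ∈ e) (heW : ∀ v ∈ W, v ∉ e) :
    IsAttachment G (insert u W) (X ⊔ SimpleGraph.fromEdgeSet {e}) := by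
  refine ⟨sup_le hX.1 ((SimpleGraph.fromEdgeSet_le _).2 ?_), ?_, ?_⟩
  · rintro _ ⟨rfl, -⟩
    exact he
  · rw [SimpleGraph.edgeSet_sup, SimpleGraph.edgeSet_fromEdgeSet]
    rintro e' (he' | ⟨rfl, -⟩)
    · obtain ⟨v, hv, hve⟩ := hX.2.1 e' he'
      exact ⟨v, mem_insert_of_mem hv, hve⟩
    · exact ⟨u, mem_insert_self u W, hu⟩
  · have hXR := reachableSetoid_mono (le_sup_left : X ≤ X ⊔ SimpleGraph.fromEdgeSet {e})
    have heR := reachableSetoid_mono (le_sup_right : SimpleGraph.fromEdgeSet {e} ≤ X ⊔ _)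
    rw [eq_top_iff, ← hX.2.2]
    refine sup_le (isolate_le_of_insert_le le_sup_left (G.not_isDiag_of_mem_edgeSet he) hu heW ?_)
      (hXR.trans le_sup_right)
    exact reachableSetoid_fromEdgeSet_singleton_le_iff.1 (heR.trans le_sup_right)

theorem isRainbowPacking_pair {ι : Type*} {e f : ι → Sym2 V} (he : Function.Injective e)
    (hf : Function.Injective f) (hef : ∀ i j, i ≠ j → e i ≠ f j)
    (hc : ∀ i, c (e i) = c (f i) → e i = f i) :
    IsRainbowPacking c fun i ↦
      SimpleGraph.fromEdgeSet {f i} ⊔ SimpleGraph.fromEdgeSet {e i} := by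
  simp only [IsRainbowPacking, SimpleGraph.edgeSet_sup, SimpleGraph.edgeSet_fromEdgeSet]
  constructor
  · rintro i _ (⟨rfl, -⟩ | ⟨rfl, -⟩) _ (⟨rfl, -⟩ | ⟨rfl, -⟩) h
    exacts [rfl, (hc i h.symm).symm, hc i h, rfl]
  · refine fun i j hij ↦ Set.disjoint_left.2 ?_
    rintro _ (⟨rfl, -⟩ | ⟨rfl, -⟩) (⟨h, -⟩ | ⟨h, -⟩)
    exacts [hij (hf h), hef j i hij.symm h.symm, hef i j hij h, hij (he h)]

variable [Fintype V]

theorem card_filter_mem_eq_degree (u : V) : #(G.edgeFinset.filter (u ∈ ·)) = G.degree u := by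
  rw [← SimpleGraph.incidenceFinset_eq_filter, SimpleGraph.card_incidenceFinset_eq_degree]

theorem degree_le_card_filter_mem_and_notMem_add_one {u v : V} (huv : u ≠ v) :
    G.degree u ≤ #(G.edgeFinset.filter fun e ↦ u ∈ e ∧ v ∉ e) + 1 := by
  have hsub : G.edgeFinset.filter (u ∈ ·) ⊆
      insert s(u, v) (G.edgeFinset.filter fun e ↦ u ∈ e ∧ v ∉ e) := by
    intro e he
    obtain ⟨heG, hu⟩ := mem_filter.1 he
    by_cases hv : v ∈ e
    · exact mem_insert.2 (Or.inl ((Sym2.mem_and_mem_iff huv).1 ⟨hu, hv⟩))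
    · exact mem_insert_of_mem (mem_filter.2 ⟨heG, hu, hv⟩)
  rw [← card_filter_mem_eq_degree]
  exact (card_le_card hsub).trans (card_insert_le _ _)

theorem exists_isAttachment_singleton {u : V} (hdeg : t ≤ G.degree u) :
    ∃ X : Fin t → SimpleGraph V, IsRainbowPacking c X ∧ ∀ i, IsAttachment G {u} (X i) := by
  rw [← card_filter_mem_eq_degree] at hdeg
  obtain ⟨S, hS, hcard⟩ := exists_subset_card_eq hdeg
  let e (i : Fin t) : Sym2 V := (S.equivFinOfCardEq hcard).symm i
  have he : Function.Injective e := Subtype.val_injective.comp (Equiv.injective _)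
  have heu (i : Fin t) : e i ∈ G.edgeSet ∧ u ∈ e i := by
    simpa using mem_filter.1 (hS ((S.equivFinOfCardEq hcard).symm i).2)
  refine ⟨_, isRainbowPacking_pair he he (fun i j hij ↦ he.ne hij) fun _ _ ↦ rfl, fun i ↦ ?_⟩
  simpa using isAttachment_empty.insert (heu i).1 (heu i).2 (by simp)

variable [DecidableEq α]

/-- The colours under `c` of the edges of `G` with an endpoint in `W`. -/
noncomputable def incidentColors (G : SimpleGraph V) (c : Sym2 V → α) (W : Finset V) : Finset α :=
  (G.edgeFinset.filter fun e ↦ ∃ v ∈ W, v ∈ e).image c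

theorem exists_isAttachment_pair {u v : V} (huv : u ≠ v) (ht : 0 < t) (hu : t < G.degree u)
    (hv : t ≤ G.degree v) (hc : t < #(incidentColors G c {u, v})) :
    ∃ X : Fin t → SimpleGraph V, IsRainbowPacking c X ∧ ∀ i, IsAttachment G {u, v} (X i) := by
  let A := G.edgeFinset.filter fun e ↦ u ∈ e ∧ v ∉ e
  let B := G.edgeFinset.filter (v ∈ ·)
  have hA : t ≤ #A :=
    Nat.le_of_lt_succ (hu.trans_le (degree_le_card_filter_mem_and_notMem_add_one huv))
  have hB : t ≤ #B := hv.trans_eq (card_filter_mem_eq_degree v).symm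
  have hdisj : Disjoint A B := disjoint_filter.2 fun e _ he ↦ he.2
  have hcolors : incidentColors G c {u, v} = (A ∪ B).image c := by
    rw [incidentColors, ← filter_or]
    congr 1
    ext e
    simp only [mem_insert, mem_singleton, exists_eq_or_imp, exists_eq_left]
    grind
  obtain ⟨e, f, he, hf, heA, hfB, hef⟩ := exists_injective_pair_color_ne hdisj ht hA
    hB (hcolors ▸ hc)
  have hne (i j : Fin t) : e i ≠ f j := fun h ↦ disjoint_left.1 hdisj (heA i) (h ▸ hfB j)
  refine ⟨_, isRainbowPacking_pair he hf (fun i j _ ↦ hne i j) fun i h ↦ (hef i h).elim,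
    fun i ↦ ?_⟩
  obtain ⟨hfG, hvf⟩ : f i ∈ G.edgeSet ∧ v ∈ f i := by simpa using mem_filter.1 (hfB i)
  obtain ⟨heG, hue, hve⟩ : e i ∈ G.edgeSet ∧ u ∈ e i ∧ v ∉ e i := by
    simpa using mem_filter.1 (heA i)
  simpa using (isAttachment_empty.insert hfG hvf (by simp)).insert heG hue (by simpa using hve)

theorem exists_isAttachment (ht : 0 < t) (hdeg : ∀ v, t < G.degree v) (hW : #W ≤ 2)
    (hc : #W = 2 → t < #(incidentColors G c W)) :
    ∃ X : Fin t → SimpleGraph V, IsRainbowPacking c X ∧ ∀ i, IsAttachment G W (X i) := by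
  obtain h | h | h : #W = 0 ∨ #W = 1 ∨ #W = 2 := by omega
  · obtain rfl := card_eq_zero.1 h
    exact ⟨⊥, by simp [IsRainbowPacking], fun _ ↦ isAttachment_empty⟩
  · obtain ⟨u, rfl⟩ := card_eq_one.1 h
    exact exists_isAttachment_singleton (hdeg u).le
  · obtain ⟨u, v, huv, rfl⟩ := card_eq_two.1 h
    exact exists_isAttachment_pair huv ht (hdeg u) (hdeg v).le (hc h)

end Attachment

section UpperBound

variable {V α : Type*} {G : SimpleGraph V} {c : Sym2 V → α} {W : Finset V} {t M : ℕ}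

/-- The subgraph of `G` formed by the edges whose colour under `c` is not in `T`. -/
def avoidColors (G : SimpleGraph V) (c : Sym2 V → α) (T : Finset α) : SimpleGraph V :=
  SimpleGraph.fromEdgeSet {e ∈ G.edgeSet | c e ∉ T}

theorem mem_edgeSet_avoidColors {T : Finset α} {e : Sym2 V} :
    e ∈ (avoidColors G c T).edgeSet ↔ e ∈ G.edgeSet ∧ c e ∉ T := by
  rw [avoidColors, SimpleGraph.edgeSet_fromEdgeSet]
  exact and_iff_left_of_imp fun h ↦ G.not_isDiag_of_mem_edgeSet h.1

variable [Fintype V]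

/-- The edges of `G` inside the classes of `Q`. -/
noncomputable def noncrossingEdges (G : SimpleGraph V) (Q : Setoid V) : Finset (Sym2 V) :=
  G.edgeFinset.filter (¬ Crosses Q ·)

variable [DecidableEq α]

theorem card_image_le_card_noncrossingEdges_add (T : Finset α) (Q : Setoid V) :
    #(G.edgeFinset.image c) ≤
      #(noncrossingEdges G Q) + #(crossingColors (avoidColors G c T) c Q) + #T := by
  have hsub : G.edgeFinset.image c ⊆
      (noncrossingEdges G Q).image c ∪ crossingColors (avoidColors G c T) c Q ∪ T := by
    intro k hk
    obtain ⟨e, he, rfl⟩ := mem_image.1 hk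
    by_cases hT : c e ∈ T
    · exact mem_union_right _ hT
    refine mem_union_left _ (mem_union.2 ?_)
    by_cases hQ : Crosses Q e
    · have heT := mem_edgeSet_avoidColors.2 ⟨SimpleGraph.mem_edgeFinset.1 he, hT⟩
      exact Or.inr (mem_image_of_mem c (mem_filter.2 ⟨SimpleGraph.mem_edgeFinset.2 heT, hQ⟩))
    · exact Or.inl (mem_image_of_mem c (mem_filter.2 ⟨he, hQ⟩))
  refine (card_le_card hsub).trans ((card_union_le _ _).trans ?_)
  gcongr
  exact (card_union_le _ _).trans (Nat.add_le_add_right card_image_le _)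

theorem incidentColors_subset_union_crossingColors (T : Finset α) :
    incidentColors G c W ⊆ crossingColors (avoidColors G c T) c (isolate W) ∪ T := by
  intro k hk
  obtain ⟨e, he, rfl⟩ := mem_image.1 hk
  obtain ⟨heG, heW⟩ := mem_filter.1 he
  by_cases hT : c e ∈ T
  · exact mem_union_right _ hT
  have heT := mem_edgeSet_avoidColors.2 ⟨SimpleGraph.mem_edgeFinset.1 heG, hT⟩
  exact mem_union_left _ (mem_image_of_mem c (mem_filter.2 ⟨SimpleGraph.mem_edgeFinset.2 heT,
    (crosses_isolate_iff (SimpleGraph.not_isDiag_of_mem_edgeFinset heG)).2 heW⟩))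

theorem reachableSetoid_avoidColors_incidentColors_le :
    (avoidColors G c (incidentColors G c W)).reachableSetoid ≤ isolate W := by
  refine reachableSetoid_le_iff.2 fun e he hcross ↦ ?_
  obtain ⟨heG, hc⟩ := mem_edgeSet_avoidColors.1 he
  rw [← SimpleGraph.mem_edgeFinset] at heG
  exact hc (mem_image_of_mem c (mem_filter.2
    ⟨heG, (crosses_isolate_iff (SimpleGraph.not_isDiag_of_mem_edgeFinset heG)).1 hcross⟩))

theorem card_noncrossingEdges_isolate {V : Type} [Fintype V] (G : SimpleGraph V) (W : Finset V) :
    #(noncrossingEdges G (isolate W)) = edgesWithin G Wᶜ := by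
  rw [noncrossingEdges, edgesWithin]
  congr 1
  refine filter_congr fun e he ↦ ?_
  rw [crosses_isolate_iff (SimpleGraph.not_isDiag_of_mem_edgeFinset he)]
  simp only [mem_compl]
  grind

theorem card_image_le_edgesWithin_compl_add {V : Type} [Fintype V] {G : SimpleGraph V}
    {c : Sym2 V → α} (W : Finset V) :
    #(G.edgeFinset.image c) ≤ edgesWithin G Wᶜ + #(incidentColors G c W) := by
  have h := card_image_le_card_noncrossingEdges_add (G := G) (c := c) (incidentColors G c W)
    (isolate W)
  have hempty : crossingColors (avoidColors G c (incidentColors G c W)) c (isolate W) = ∅ := by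
    rw [crossingColors, filter_false_of_mem, image_empty]
    exact fun e he ↦ reachableSetoid_le_iff.1 reachableSetoid_avoidColors_incidentColors_le e
      (SimpleGraph.mem_edgeFinset.1 he)
  rwa [hempty, card_empty, add_zero, card_noncrossingEdges_isolate] at h

theorem exists_card_le_two_forall_mul_card_add_le (G : SimpleGraph V) (c : Sym2 V → α) (t : ℕ) :
    ∃ W : Finset V, #W ≤ 2 ∧ ∀ U : Finset V, #U ≤ 2 →
      t * #U + #(incidentColors G c W) ≤ t * #W + #(incidentColors G c U) := by
  obtain ⟨W, hW, hmax⟩ := exists_max_image (univ.filter fun W : Finset V ↦ #W ≤ 2)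
    (fun W ↦ (t * #W - #(incidentColors G c W) : ℤ)) ⟨∅, by simp⟩
  refine ⟨W, (mem_filter.1 hW).2, fun U hU ↦ ?_⟩
  have := hmax U (mem_filter.2 ⟨mem_univ U, hU⟩)
  zify
  linarith

theorem mul_card_quotient_le_card_crossingColors_add (hW : #W ≤ 2)
    (hopt : ∀ U : Finset V, #U ≤ 2 →
      t * #U + #(incidentColors G c W) ≤ t * #W + #(incidentColors G c U))
    (hV : 2 < Fintype.card V) (hM : M < #(G.edgeFinset.image c))
    (hpart : ∀ Q : Setoid V, (∀ U : Finset V, #U ≤ 2 → Q ≠ isolate U) →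
      #(noncrossingEdges G Q) + t * Nat.card (Quotient Q) ≤ M + 1 + t) (Q : Setoid V) :
    t * Nat.card (Quotient Q) ≤
      #(crossingColors (avoidColors G c (incidentColors G c W)) c Q) +
        t * Nat.card (Quotient (isolate W)) := by
  have hproper {U : Finset V} (hU : #U ≤ 2) : U ≠ univ := by
    rintro rfl
    exact (hU.trans_lt hV).ne card_univ
  rw [card_quotient_isolate (hproper hW), mul_add_one]
  by_cases hQ : ∃ U : Finset V, #U ≤ 2 ∧ Q = isolate U
  · obtain ⟨U, hU, rfl⟩ := hQ
    have hUcolors := (card_le_card (incidentColors_subset_union_crossingColors (G := G) (c := c)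
      (W := U) (incidentColors G c W))).trans (card_union_le _ _)
    have := hopt U hU
    rw [card_quotient_isolate (hproper hU), mul_add_one]
    omega
  · push Not at hQ
    have hcolors := card_image_le_card_noncrossingEdges_add (G := G) (c := c)
      (incidentColors G c W) Q
    have := hpart Q hQ
    have hle := hopt ∅ (by simp)
    have hempty : incidentColors G c ∅ = ∅ := by simp [incidentColors]
    rw [hempty, card_empty, card_empty, mul_zero, zero_add, add_zero] at hle
    omega

end UpperBound

theorem hasRainbowSpanningTrees_of_connected {V : Type} [Fintype V] {G : SimpleGraph V}
    {c : Sym2 V → ℕ} {t : ℕ} {F : Fin t → SimpleGraph V} (hFG : ∀ i, F i ≤ G)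
    (hF : IsRainbowPacking c F) (hconn : ∀ i, (F i).Connected) : HasRainbowSpanningTrees G c t := by
  choose T hTF hT using fun i ↦ (hconn i).exists_isTree_le
  have hTF' (i : Fin t) : (T i).edgeSet ⊆ (F i).edgeSet := SimpleGraph.edgeSet_mono (hTF i)
  exact ⟨T, fun i ↦ (hTF i).trans (hFG i), hT, fun i ↦ (hF.1 i).mono (hTF' i),
    fun i j hij ↦ (hF.2 i j hij).mono (hTF' i) (hTF' j)⟩

theorem hasRainbowSpanningTrees_of_lt_card_image {V : Type} [Fintype V] [Nonempty V]
    {G : SimpleGraph V} {c : Sym2 V → ℕ} {t M : ℕ} (ht : 0 < t) (hdeg : ∀ v, t < G.degree v)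
    (hpair : ∀ S : Finset V, #S + 2 = Fintype.card V → edgesWithin G S + t ≤ M)
    (hpart : ∀ Q : Setoid V, (∀ U : Finset V, #U ≤ 2 → Q ≠ isolate U) →
      #(noncrossingEdges G Q) + t * Nat.card (Quotient Q) ≤ M + 1 + t)
    (hM : M < #(G.edgeFinset.image c)) : HasRainbowSpanningTrees G c t := by
  have hV : 2 < Fintype.card V := by
    have := hdeg (Classical.arbitrary V)
    have := G.degree_lt_card_verts (Classical.arbitrary V)
    omega
  obtain ⟨W, hW, hopt⟩ := exists_card_le_two_forall_mul_card_add_le G c t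
  obtain ⟨F, hFH, hF, hFconn⟩ := exists_isRainbowPacking_of_le_crossingColors
    reachableSetoid_avoidColors_incidentColors_le
    fun Q _ ↦ mul_card_quotient_le_card_crossingColors_add hW hopt hV hM hpart Q
  obtain ⟨X, hX, hXW⟩ := exists_isAttachment (c := c) ht hdeg hW fun hW2 ↦ by
    have := hpair Wᶜ (by rw [← hW2, card_compl_add_card])
    have := card_image_le_edgesWithin_compl_add (G := G) (c := c) W
    omega
  have hFedge {i : Fin t} {e : Sym2 V} (he : e ∈ (F i).edgeSet) :=
    mem_edgeSet_avoidColors.1 (SimpleGraph.edgeSet_mono (hFH i) he)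
  have hXcolor {i : Fin t} {e : Sym2 V} (he : e ∈ (X i).edgeSet) : c e ∈ incidentColors G c W :=
    mem_image_of_mem c (mem_filter.2 ⟨SimpleGraph.mem_edgeFinset.2
      (SimpleGraph.edgeSet_mono (hXW i).1 he), (hXW i).2.1 e he⟩)
  refine hasRainbowSpanningTrees_of_connected (F := F ⊔ X) (fun i ↦ sup_le ?_ (hXW i).1)
    (hF.sup hX fun i j e he e' he' h ↦ (hFedge he).2 (h ▸ hXcolor he')) fun i ↦ ?_
  · exact SimpleGraph.edgeSet_subset_edgeSet.1 fun e he ↦ (hFedge he).1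
  · have htop : (F i ⊔ X i).reachableSetoid = ⊤ := by
      rw [eq_top_iff, ← (hXW i).2.2]
      exact sup_le ((hFconn i).trans (reachableSetoid_mono le_sup_left))
        (reachableSetoid_mono le_sup_right)
    exact ⟨fun u v ↦ Setoid.eq_top_iff.1 htop u v⟩

theorem exists_coloring_const_on {ε : Type*} [Finite ε] [DecidableEq ε] {E Z : Finset ε}
    (hZE : Z ⊆ E) (hZ : Z.Nonempty) :
    ∃ c : ε → ℕ, #(E.image c) = #(E \ Z) + 1 ∧ ∀ e ∈ Z, ∀ f ∈ Z, c e = c f := by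
  have := Fintype.ofFinite ε
  let c (e : ε) : ℕ := if e ∈ Z then 0 else Fintype.equivFin ε e + 1
  have hc0 : ∀ e ∈ Z, c e = 0 := fun e he ↦ if_pos he
  have hcinj : Set.InjOn c (E \ Z : Finset ε) := by
    intro e he f hf hef
    simpa [c, (mem_sdiff.1 he).2, (mem_sdiff.1 hf).2, Fin.val_inj] using hef
  have himage : E.image c = insert 0 ((E \ Z).image c) := by
    conv_lhs => rw [← sdiff_union_of_subset hZE, image_union, union_comm]
    rw [insert_eq, image_congr (f := c) (g := fun _ ↦ 0) (fun e he ↦ hc0 e he), image_const hZ]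
  refine ⟨c, ?_, fun e he f hf ↦ (hc0 e he).trans (hc0 f hf).symm⟩
  rw [himage, card_insert_of_notMem, card_image_of_injOn hcinj]
  rintro h
  obtain ⟨e, he, he0⟩ := mem_image.1 h
  simp [c, (mem_sdiff.1 he).2] at he0

theorem card_quotient_le_card_crossing_add_one {V : Type*} [Fintype V] {T : SimpleGraph V}
    (hT : T.Connected) (Q : Setoid V) :
    Nat.card (Quotient Q) ≤ #(T.edgeFinset.filter (Crosses Q)) + 1 := by
  let S := T.map (Quotient.mk Q)
  have hle : T.reachableSetoid ≤ S.reachableSetoid.comap (Quotient.mk Q) := by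
    rw [reachableSetoid_le_iff]
    rintro ⟨u, v⟩ huv hcross
    refine crosses_mk.1 hcross (SimpleGraph.Adj.reachable (SimpleGraph.map_adj_apply' huv ?_))
    rintro h
    exact crosses_mk.1 hcross (show S.Reachable ⟦u⟧ ⟦v⟧ from h ▸ SimpleGraph.Reachable.refl _)
  have hS : S.Connected := by
    have := hT.nonempty.map (Quotient.mk Q)
    exact ⟨Quotient.mk_surjective.forall₂.2 fun u v ↦ hle (hT.preconnected u v)⟩
  have hsub : S.edgeSet ⊆ (T.edgeFinset.filter (Crosses Q)).image (Sym2.map (Quotient.mk Q)) := by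
    rintro ⟨a, b⟩ ⟨hab, u, v, huv, rfl, rfl⟩
    have hcross : Crosses Q s(u, v) := crosses_mk.2 fun h ↦ hab (Quotient.sound h)
    exact mem_coe.2 (mem_image_of_mem (Sym2.map (Quotient.mk Q))
      (mem_filter.2 ⟨SimpleGraph.mem_edgeFinset.2 huv, hcross⟩))
  calc Nat.card (Quotient Q) ≤ Nat.card S.edgeSet + 1 := hS.card_vert_le_card_edgeSet_add_one
    _ ≤ #((T.edgeFinset.filter (Crosses Q)).image (Sym2.map (Quotient.mk Q))) + 1 := by
      rw [Nat.card_coe_set_eq, ← Set.ncard_coe_finset]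
      exact Nat.add_le_add_right (Set.ncard_le_ncard hsub) 1
    _ ≤ _ := Nat.add_le_add_right card_image_le 1

theorem le_card_filter_mem_edgeSet {V α : Type*} [Fintype V] {G T : SimpleGraph V} {Q : Setoid V}
    {c : Sym2 V → α} {K : Finset (Sym2 V)} {k : ℕ}
    (hQ : Nat.card (Quotient Q) = k + 2) (hTG : T ≤ G) (hT : T.Connected)
    (hinj : Set.InjOn c T.edgeSet)
    (hc : ∀ e ∈ G.edgeFinset.filter (Crosses Q) \ K,
      ∀ f ∈ G.edgeFinset.filter (Crosses Q) \ K, c e = c f) :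
    k ≤ #(K.filter (· ∈ T.edgeSet)) := by
  let Z := G.edgeFinset.filter (Crosses Q) \ K
  have hsub : T.edgeFinset.filter (Crosses Q) ⊆
      K.filter (· ∈ T.edgeSet) ∪ Z.filter (· ∈ T.edgeSet) := by
    intro e he
    have hG := SimpleGraph.edgeSet_mono hTG
    simp only [mem_filter, SimpleGraph.mem_edgeFinset] at he
    by_cases heK : e ∈ K
    · exact mem_union_left _ (mem_filter.2 ⟨heK, he.1⟩)
    · simp [Z, heK, he, hG he.1]
  have hone : #(Z.filter (· ∈ T.edgeSet)) ≤ 1 := by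
    refine card_le_one.2 fun e he f hf ↦ ?_
    rw [mem_filter] at he hf
    exact hinj he.2 hf.2 (hc e he.1 f hf.1)
  have hcross := card_quotient_le_card_crossing_add_one hT Q
  have hunion := (card_le_card hsub).trans (card_union_le _ _)
  omega

theorem exists_coloring_not_hasRainbowSpanningTrees {V : Type} [Fintype V] {G : SimpleGraph V}
    {Q : Setoid V} {t k : ℕ} (hQ : Nat.card (Quotient Q) = k + 2) (htk : 0 < t * k)
    (hcard : #(noncrossingEdges G Q) + t * k ≤ #G.edgeFinset) :
    ∃ c : Sym2 V → ℕ, #(G.edgeFinset.image c) = #(noncrossingEdges G Q) + t * k ∧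
      ¬ HasRainbowSpanningTrees G c t := by
  have hsplit : #(G.edgeFinset.filter (Crosses Q)) + #(noncrossingEdges G Q) = #G.edgeFinset :=
    card_filter_add_card_filter_not _
  -- All crossing edges outside `K` share one colour, so each rainbow tree has `k` edges in `K`.
  obtain ⟨K, hK, hKcard⟩ :=
    exists_subset_card_eq (show t * k - 1 ≤ #(G.edgeFinset.filter (Crosses Q)) by omega)
  let Z := G.edgeFinset.filter (Crosses Q) \ K
  have hZcard : #Z + (t * k - 1) = #(G.edgeFinset.filter (Crosses Q)) :=
    hKcard ▸ card_sdiff_add_card_eq_card hK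
  have hZG : Z ⊆ G.edgeFinset := sdiff_subset.trans (filter_subset _ _)
  obtain ⟨c, hc, hcZ⟩ := exists_coloring_const_on hZG (card_pos.1 (by omega))
  refine ⟨c, by rw [hc, card_sdiff_of_subset hZG]; omega, ?_⟩
  rintro ⟨T, hTG, hT, hinj, hdisj⟩
  have hsum : t * k ≤ #K := calc
    t * k ≤ ∑ i, #(K.filter (· ∈ (T i).edgeSet)) := by
      simpa using card_nsmul_le_sum univ _ _ fun i _ ↦
        le_card_filter_mem_edgeSet hQ (hTG i) (hT i).1 (hinj i) hcZ
    _ = #(univ.biUnion fun i ↦ K.filter (· ∈ (T i).edgeSet)) := by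
      refine (card_biUnion fun i _ j _ hij ↦ disjoint_filter.2 fun e _ hi hj ↦ ?_).symm
      exact Set.disjoint_left.1 (hdisj i j hij) hi hj
    _ ≤ #K := card_le_card (biUnion_subset.2 fun i _ ↦ filter_subset _ _)
  omega

theorem exists_coloring_not_hasRainbowSpanningTrees_of_card_add_two_eq {V : Type} [Fintype V]
    {G : SimpleGraph V} {t : ℕ} {S : Finset V} (hS : S.Nonempty) (hSV : #S + 2 = Fintype.card V)
    (ht : 0 < t) (hcard : edgesWithin G S + t ≤ #G.edgeFinset) :
    ∃ c : Sym2 V → ℕ, #(G.edgeFinset.image c) = edgesWithin G S + t ∧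
      ¬ HasRainbowSpanningTrees G c t := by
  have hQ : Nat.card (Quotient (isolate Sᶜ)) = 1 + 2 := by
    have hcompl : #Sᶜ = 2 := by rw [card_compl, ← hSV, Nat.add_sub_cancel_left]
    rw [card_quotient_isolate (compl_ne_univ_iff_nonempty _ |>.2 hS), hcompl]
  have hedges : #(noncrossingEdges G (isolate Sᶜ)) = edgesWithin G S := by
    rw [card_noncrossingEdges_isolate, compl_compl]
  simpa only [hedges, mul_one] using exists_coloring_not_hasRainbowSpanningTrees (G := G) (t := t)
    hQ (by rwa [mul_one]) (by rwa [hedges, mul_one])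

section Arithmetic

theorem exists_mul_ge_of_two_blocks {a b c d : ℕ} (h : 1 ≤ a + b) (h' : 1 ≤ c + d) :
    ∃ x y, x + y + 1 = a + b + (c + d) ∧ y ≤ b + d ∧ a * b + c * d ≤ x * y := by
  obtain rfl | ⟨a, rfl⟩ := a.eq_zero_or_pos.imp_right Nat.exists_eq_add_of_le'
  · exact ⟨c, b + d - 1, by omega, by omega, by nlinarith [show d ≤ b + d - 1 by omega]⟩
  obtain rfl | ⟨c, rfl⟩ := c.eq_zero_or_pos.imp_right Nat.exists_eq_add_of_le'
  · exact ⟨a + 1, b + d - 1, by omega, by omega, by nlinarith [show b ≤ b + d - 1 by omega]⟩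
  exact ⟨a + c + 1, b + d, by omega, le_rfl, by nlinarith [Nat.zero_le (a * d)]⟩

theorem exists_mul_add_one_ge_of_two_blocks {a b c d : ℕ} (h : 2 ≤ a + b) (h' : 2 ≤ c + d) :
    ∃ x y, x + y + 2 = a + b + (c + d) ∧ y ≤ b + d ∧ a * b + c * d ≤ x * y + 1 := by
  obtain rfl | ⟨a, rfl⟩ := a.eq_zero_or_pos.imp_right Nat.exists_eq_add_of_le'
  · exact ⟨c, b + d - 2, by omega, by omega, by nlinarith [show d ≤ b + d - 2 by omega]⟩
  obtain rfl | ⟨c, rfl⟩ := c.eq_zero_or_pos.imp_right Nat.exists_eq_add_of_le'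
  · exact ⟨a + 1, b + d - 2, by omega, by omega, by nlinarith [show b ≤ b + d - 2 by omega]⟩
  obtain rfl | ⟨b, rfl⟩ := b.eq_zero_or_pos.imp_right Nat.exists_eq_add_of_le'
  · exact ⟨a + c, d, by omega, by omega, by nlinarith [show 1 ≤ a by omega]⟩
  obtain rfl | ⟨d, rfl⟩ := d.eq_zero_or_pos.imp_right Nat.exists_eq_add_of_le'
  · exact ⟨a + c, b + 1, by omega, by omega, by nlinarith [show 1 ≤ c by omega]⟩
  exact ⟨a + c + 1, b + d + 1, by omega, by omega, by
    nlinarith [Nat.zero_le (a * d), Nat.zero_le (c * b)]⟩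

theorem exists_mul_ge_sum {ι : Type*} {I : Finset ι} {x y : ι → ℕ} (hI : I.Nonempty)
    (hxy : ∀ i ∈ I, 1 ≤ x i + y i) :
    ∃ a b, a + b + #I = ∑ i ∈ I, (x i + y i) + 1 ∧ 1 ≤ a + b ∧ b ≤ ∑ i ∈ I, y i ∧
      ∑ i ∈ I, x i * y i ≤ a * b := by
  induction hI using Finset.Nonempty.cons_induction with
  | singleton i => exact ⟨x i, y i, by simpa using hxy⟩
  | cons i I hi _ ih =>
    obtain ⟨a, b, hab, hpos, hb, hsum⟩ := ih fun j hj ↦ hxy j (mem_cons_of_mem hj)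
    have hi1 := hxy i (mem_cons_self i I)
    obtain ⟨a', b', hab', hb', hmul⟩ := exists_mul_ge_of_two_blocks hi1 hpos
    refine ⟨a', b', ?_, by omega, ?_, ?_⟩ <;> simp only [sum_cons, card_cons] <;> omega

theorem exists_mul_add_one_ge_sum {ι : Type*} {I : Finset ι} {x y : ι → ℕ} {i j : ι}
    (hi : i ∈ I) (hj : j ∈ I) (hij : i ≠ j) (hxy : ∀ i ∈ I, 1 ≤ x i + y i) (hi2 : 2 ≤ x i + y i)
    (hj2 : 2 ≤ x j + y j) :
    ∃ a b, a + b + #I = ∑ i ∈ I, (x i + y i) ∧ 1 ≤ a + b ∧ b ≤ ∑ i ∈ I, y i ∧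
      ∑ i ∈ I, x i * y i ≤ a * b + 1 := by
  classical
  have hjI : j ∈ I.erase i := mem_erase.2 ⟨hij.symm, hj⟩
  obtain ⟨a, b, hab, -, hb, hsum⟩ :=
    exists_mul_ge_sum ⟨j, hjI⟩ fun k hk ↦ hxy k (mem_of_mem_erase hk)
  have hlt : #(I.erase i) < ∑ k ∈ I.erase i, (x k + y k) := by
    simpa using sum_lt_sum (fun k hk ↦ hxy k (mem_of_mem_erase hk)) ⟨j, hjI, hj2⟩
  obtain ⟨a', b', hab', hb', hmul⟩ :=
    exists_mul_add_one_ge_of_two_blocks hi2 (show 2 ≤ a + b by omega)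
  have hcard := card_erase_add_one hi
  refine ⟨a', b', ?_, by omega, ?_, ?_⟩ <;> simp only [← add_sum_erase I _ hi] <;> omega

theorem mul_le_of_add_two_eq {p q x y : ℕ} (hp : 2 ≤ p) (hpq : q ≤ p) (hxy : x + y + 2 = p + q)
    (hy : y ≤ q) : x * y ≤ (p - 2) * q + if p = q then 1 else 0 := by
  obtain ⟨k, rfl⟩ := Nat.exists_eq_add_of_le' hp
  rw [Nat.add_sub_cancel]
  obtain rfl | rfl | hyq : y = q ∨ y + 1 = q ∨ y + 2 ≤ q := by omega
  · obtain rfl : x = k := by omega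
    exact Nat.le_add_right _ _
  · obtain rfl : x = k + 1 := by omega
    have hyk : y ≤ k + if k + 2 = y + 1 then 1 else 0 := by split_ifs <;> omega
    linarith [add_one_mul k y, mul_add_one k y]
  · obtain ⟨d, rfl⟩ := Nat.exists_eq_add_of_le' hyq
    obtain rfl : x = k + (d + 2) := by omega
    have hyk := Nat.mul_le_mul_left (d + 2) (show y ≤ k by omega)
    exact le_add_right (by linarith [add_mul k (d + 2) y, mul_add k d (y + 2)])

theorem two_mul_mul_le {q s u v : ℤ} (hv : 0 ≤ v) (hs : 3 ≤ s) (hus : u + v ≤ s)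
    (huq : u + v < 2 * q) (hq : 0 ≤ q) : 2 * (u * v) ≤ (q + 1) * (s - 3) + 4 := by
  have hsq : 4 * (u * v) ≤ (u + v) ^ 2 := by linarith [sq_nonneg (u - v)]
  obtain hw | hw := le_or_gt (u + v) 2
  · have huv : u * v ≤ 1 := by
      obtain hu | hu := le_or_gt u 0
      · linarith [mul_nonpos_of_nonpos_of_nonneg hu hv]
      · nlinarith
    nlinarith
  · have hfactor : 0 ≤ (u + v - 3) * (2 * q - 1 - (u + v)) :=
      mul_nonneg (by omega) (by omega)
    have hmono : (q + 1) * (u + v - 3) ≤ (q + 1) * (s - 3) :=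
      mul_le_mul_of_nonneg_left (by omega) (by omega)
    have hfour : 4 * (u * v) ≤ 2 * ((q + 1) * (s - 3)) + 9 := by linarith
    omega

theorem mul_add_mul_le_of_add_eq {p q t s x y : ℕ} (hp : 2 ≤ p) (hpq : q ≤ p)
    (hq : 2 * t + 1 ≤ q) (hs : 3 ≤ s) (hxy : x + y + s = p + q) (hpos : 1 ≤ x + y)
    (hy : y ≤ q) : x * y + t * s ≤ (p - 2) * q + t + 1 := by
  have huv := two_mul_mul_le (q := q) (s := s) (u := q - x) (v := q - y) (by omega) (by omega)
    (by omega) (by omega) (by omega)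
  have hsum : (x + y + s : ℤ) = p + q := by exact_mod_cast hxy
  have hkey : (p - 2 : ℤ) * q - x * y = q * (s - 2) - (q - x) * (q - y) := by
    linear_combination -(q : ℤ) * hsum
  have hts : 2 * (t * (s - 1) : ℤ) ≤ (q - 1) * (s - 1) := by
    rw [← mul_assoc]
    exact mul_le_mul_of_nonneg_right (by omega) (by omega)
  zify [hp]
  linarith

end Arithmetic

section Blocks

theorem eq_isolate_of_forall_rel {V : Type*} [Fintype V] {Q : Setoid V} {a : V}
    (ha : ∀ x y, x ≠ y → Q x y → Q a x) : Q = isolate (univ.filter (¬ Q a ·)) := by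
  ext x y
  rw [isolate_apply]
  simp only [mem_filter, mem_univ, true_and, not_not]
  constructor
  · intro h
    obtain rfl | hxy := eq_or_ne x y
    · exact Or.inl rfl
    · exact Or.inr ⟨ha x y hxy h, ha y x hxy.symm (Q.symm h)⟩
  · rintro (rfl | ⟨hx, hy⟩)
    exacts [Q.refl x, Q.trans (Q.symm hx) hy]

theorem four_le_card_quotient_or_exists_rel {V : Type*} [Finite V] [Nonempty V] {Q : Setoid V}
    (hQ : ∀ U : Finset V, #U ≤ 2 → Q ≠ isolate U) :
    4 ≤ Nat.card (Quotient Q) ∨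
      ∃ a b c d, a ≠ b ∧ c ≠ d ∧ Q a b ∧ Q c d ∧ ¬ Q a c := by
  have := Fintype.ofFinite V
  by_cases hnon : ∃ a, ∀ x y, x ≠ y → Q x y → Q a x
  · obtain ⟨a, ha⟩ := hnon
    have hU := eq_isolate_of_forall_rel ha
    have hcard : Nat.card (Quotient Q) = #(univ.filter (¬ Q a ·)) + 1 := by
      conv_lhs => rw [hU]
      refine card_quotient_isolate fun h ↦ ?_
      exact (mem_filter.1 (h.ge (mem_univ a))).2 (Q.refl a)
    refine Or.inl (not_lt.1 fun hlt ↦ hQ _ ?_ hU)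
    omega
  · push Not at hnon
    obtain ⟨a, b, hab, hQab, -⟩ := hnon (Classical.arbitrary V)
    obtain ⟨c, d, hcd, hQcd, hac⟩ := hnon a
    exact Or.inr ⟨a, b, c, d, hab, hcd, hQab, hQcd, hac⟩

/-- The class `b` of `Q`, as a finset of vertices. -/
noncomputable def block {V : Type*} [Fintype V] {Q : Setoid V} (b : Quotient Q) : Finset V :=
  univ.filter fun v ↦ ⟦v⟧ = b

theorem mem_block {V : Type*} [Fintype V] {Q : Setoid V} {b : Quotient Q} {v : V} :
    v ∈ block b ↔ ⟦v⟧ = b := by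
  simp [block]

theorem block_nonempty {V : Type*} [Fintype V] {Q : Setoid V} (b : Quotient Q) :
    (block b).Nonempty :=
  b.exists_rep.imp fun _ ↦ mem_block.2

theorem sum_card_block {V : Type*} [Fintype V] (Q : Setoid V) :
    ∑ b : Quotient Q, #(block b) = Fintype.card V :=
  (card_eq_sum_card_fiberwise fun v _ ↦ mem_coe.2 (mem_univ (⟦v⟧ : Quotient Q))).symm

theorem card_noncrossingEdges_le_sum {V : Type} [Fintype V] (G : SimpleGraph V) (Q : Setoid V) :
    #(noncrossingEdges G Q) ≤ ∑ b : Quotient Q, edgesWithin G (block b) := by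
  refine (card_le_card fun e he ↦ ?_).trans card_biUnion_le
  obtain ⟨heG, he⟩ := mem_filter.1 he
  induction e with
  | h u v =>
    refine mem_biUnion.2 ⟨⟦u⟧, mem_univ _, mem_filter.2 ⟨heG, fun w hw ↦ mem_block.2 ?_⟩⟩
    obtain rfl | rfl := Sym2.mem_iff.1 hw
    · rfl
    · exact Quotient.sound (not_not.1 fun h ↦ he (crosses_mk.2 fun h' ↦ h (Q.symm h')))

variable {α β : Type} [Fintype α] [Fintype β]

theorem edgesWithin_completeBipartiteGraph (S : Finset (α ⊕ β)) :
    edgesWithin (completeBipartiteGraph α β) S = #S.toLeft * #S.toRight := by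
  rw [edgesWithin, ← card_product]
  refine (card_bij (fun z _ ↦ s(Sum.inl z.1, Sum.inr z.2)) ?_ ?_ ?_).symm
  · simp +contextual
  · simp +contextual [Prod.ext_iff]
  · rintro ⟨u | u, v | v⟩ h
    · simp at h
    · exact ⟨(u, v), by simpa using h, rfl⟩
    · exact ⟨(v, u), by simpa [and_comm] using h, Sym2.eq_swap⟩
    · simp at h

theorem sum_card_toRight_block (Q : Setoid (α ⊕ β)) :
    ∑ b : Quotient Q, #(block b).toRight = Fintype.card β := by
  rw [← card_univ, card_eq_sum_card_fiberwise (f := fun y ↦ (⟦.inr y⟧ : Quotient Q))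
    (t := univ) fun _ _ ↦ mem_coe.2 (mem_univ _)]
  refine sum_congr rfl fun b _ ↦ congrArg card ?_
  ext y
  simp [mem_block]

theorem card_noncrossingEdges_completeBipartiteGraph_add_le {t : ℕ} (ht : 0 < t)
    (hβ : 2 * t + 1 ≤ Fintype.card β) (hαβ : Fintype.card β ≤ Fintype.card α) {Q : Setoid (α ⊕ β)}
    (hQ : ∀ U : Finset (α ⊕ β), #U ≤ 2 → Q ≠ isolate U) :
    #(noncrossingEdges (completeBipartiteGraph α β) Q) + t * Nat.card (Quotient Q) ≤
      (Fintype.card α - 2) * Fintype.card β + t +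
        (if Fintype.card α = Fintype.card β then 1 else 0) + 1 + t := by
  have : Nonempty α := Fintype.card_pos_iff.1 (by omega)
  have hedges := card_noncrossingEdges_le_sum (completeBipartiteGraph α β) Q
  simp only [edgesWithin_completeBipartiteGraph] at hedges
  have hright := sum_card_toRight_block Q
  have htotal : ∑ b : Quotient Q, (#(block b).toLeft + #(block b).toRight) =
      Fintype.card α + Fintype.card β := by
    simp only [card_toLeft_add_card_toRight, sum_card_block, Fintype.card_sum]
  have hblock (b : Quotient Q) : 1 ≤ #(block b).toLeft + #(block b).toRight := by
    rw [card_toLeft_add_card_toRight]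
    exact card_pos.2 (block_nonempty b)
  rw [Nat.card_eq_fintype_card, ← card_univ]
  obtain hfour | ⟨a, b, c, d, hab, hcd, hQab, hQcd, hac⟩ := four_le_card_quotient_or_exists_rel hQ
  · rw [Nat.card_eq_fintype_card, ← card_univ] at hfour
    obtain ⟨x, y, hxy, hpos, hy, hle⟩ := exists_mul_ge_sum (I := (univ : Finset (Quotient Q)))
      (card_pos.1 (by omega)) fun b _ ↦ hblock b
    obtain ⟨s, hs⟩ := Nat.exists_eq_add_of_le' (show 1 ≤ #(univ : Finset (Quotient Q)) by omega)
    have hbound : x * y + t * s ≤ (Fintype.card α - 2) * Fintype.card β + t + 1 :=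
      mul_add_mul_le_of_add_eq (by omega) hαβ hβ (by omega) (by omega) hpos (by omega)
    rw [hs, mul_add_one]
    omega
  · have hne : (⟦a⟧ : Quotient Q) ≠ ⟦c⟧ := fun h ↦ hac (Quotient.exact h)
    have htwo {a b : α ⊕ β} (hab : a ≠ b) (h : Q a b) :
        2 ≤ #(block (⟦a⟧ : Quotient Q)).toLeft + #(block (⟦a⟧ : Quotient Q)).toRight := by
      rw [card_toLeft_add_card_toRight]
      exact one_lt_card.2 ⟨a, mem_block.2 rfl, b, mem_block.2 (Quotient.sound (Q.symm h)), hab⟩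
    obtain ⟨x, y, hxy, hpos, hy, hle⟩ := exists_mul_add_one_ge_sum (mem_univ _) (mem_univ _) hne
      (fun b _ ↦ hblock b) (htwo hab hQab) (htwo hcd hQcd)
    have hcard : 2 ≤ #(univ : Finset (Quotient Q)) :=
      one_lt_card.2 ⟨_, mem_univ _, _, mem_univ _, hne⟩
    obtain heq | hlt := hcard.eq_or_lt
    · have hbound := mul_le_of_add_two_eq (x := x) (y := y) (by omega) hαβ (by omega) (by omega)
      rw [← heq]
      omega
    · have hbound := mul_add_mul_le_of_add_eq (x := x) (y := y) (by omega) hαβ hβ hlt (by omega)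
        hpos (by omega)
      omega

end Blocks

section CompleteBipartite

variable {α β : Type} [Fintype α] [Fintype β] {t : ℕ}

theorem card_edgeFinset_completeBipartiteGraph :
    #(completeBipartiteGraph α β).edgeFinset = Fintype.card α * Fintype.card β := by
  have h := SimpleGraph.encard_edgeSet_completeBipartiteGraph (W₁ := α) (W₂ := β)
  rw [← SimpleGraph.coe_edgeFinset, Set.encard_coe_eq_coe_finsetCard,
    ENat.card_eq_coe_fintype_card, ENat.card_eq_coe_fintype_card] at h
  exact_mod_cast h

theorem degree_completeBipartiteGraph_inl (a : α) :
    (completeBipartiteGraph α β).degree (.inl a) = Fintype.card β := by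
  rw [← card_univ, ← card_map .inr]
  refine congrArg card ?_
  ext (b | b) <;> simp

theorem degree_completeBipartiteGraph_inr (b : β) :
    (completeBipartiteGraph α β).degree (.inr b) = Fintype.card α := by
  rw [← card_univ, ← card_map .inl]
  refine congrArg card ?_
  ext (b | b) <;> simp

theorem edgesWithin_completeBipartiteGraph_le (hα : 2 ≤ Fintype.card α)
    (hαβ : Fintype.card β ≤ Fintype.card α) {S : Finset (α ⊕ β)}
    (hS : #S + 2 = Fintype.card (α ⊕ β)) :
    edgesWithin (completeBipartiteGraph α β) S ≤
      (Fintype.card α - 2) * Fintype.card β +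
        if Fintype.card α = Fintype.card β then 1 else 0 := by
  rw [Fintype.card_sum, ← card_toLeft_add_card_toRight] at hS
  rw [edgesWithin_completeBipartiteGraph]
  exact mul_le_of_add_two_eq hα hαβ hS (card_le_univ _)

theorem exists_edgesWithin_completeBipartiteGraph_eq (hα : 2 ≤ Fintype.card α) :
    ∃ S : Finset (α ⊕ β), #S + 2 = Fintype.card (α ⊕ β) ∧
      edgesWithin (completeBipartiteGraph α β) S =
        (Fintype.card α - 2) * Fintype.card β +
          if Fintype.card α = Fintype.card β then 1 else 0 := by
  obtain ⟨x, y, hx, hy, hsum, hmul⟩ : ∃ x y, x ≤ Fintype.card α ∧ y ≤ Fintype.card β ∧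
      x + y + 2 = Fintype.card α + Fintype.card β ∧ x * y = (Fintype.card α - 2) * Fintype.card β +
        if Fintype.card α = Fintype.card β then 1 else 0 := by
    split_ifs with h
    · rw [← h]
      obtain ⟨k, hk⟩ := Nat.exists_eq_add_of_le' hα
      exact ⟨k + 1, k + 1, by omega, by omega, by omega, by rw [hk, Nat.add_sub_cancel]; ring⟩
    · exact ⟨Fintype.card α - 2, Fintype.card β, by omega, le_rfl, by omega, rfl⟩
  obtain ⟨A, -, rfl⟩ := exists_subset_card_eq (hx.trans_eq card_univ.symm)
  obtain ⟨B, -, rfl⟩ := exists_subset_card_eq (hy.trans_eq card_univ.symm)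
  refine ⟨A.disjSum B, ?_, ?_⟩
  · rw [card_disjSum, hsum, Fintype.card_sum]
  · rw [edgesWithin_completeBipartiteGraph, toLeft_disjSum, toRight_disjSum, hmul]

theorem hasRainbowSpanningTrees_completeBipartiteGraph {c : Sym2 (α ⊕ β) → ℕ} (ht : 0 < t)
    (hβ : 2 * t + 1 ≤ Fintype.card β) (hαβ : Fintype.card β ≤ Fintype.card α)
    (hc : (Fintype.card α - 2) * Fintype.card β + t +
      (if Fintype.card α = Fintype.card β then 1 else 0) <
        #((completeBipartiteGraph α β).edgeFinset.image c)) :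
    HasRainbowSpanningTrees (completeBipartiteGraph α β) c t := by
  have : Nonempty α := Fintype.card_pos_iff.1 (by omega)
  refine hasRainbowSpanningTrees_of_lt_card_image ht ?_ (fun S hS ↦ ?_)
    (fun Q hQ ↦ card_noncrossingEdges_completeBipartiteGraph_add_le ht hβ hαβ hQ) hc
  · rintro (a | b)
    · rw [degree_completeBipartiteGraph_inl]
      omega
    · rw [degree_completeBipartiteGraph_inr]
      omega
  · have := edgesWithin_completeBipartiteGraph_le (by omega) hαβ hS
    omega

theorem exists_coloring_completeBipartiteGraph (ht : 0 < t)
    (hβ : 2 * t + 1 ≤ Fintype.card β) (hαβ : Fintype.card β ≤ Fintype.card α) :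
    ∃ c : Sym2 (α ⊕ β) → ℕ, #((completeBipartiteGraph α β).edgeFinset.image c) =
      (Fintype.card α - 2) * Fintype.card β + t +
        (if Fintype.card α = Fintype.card β then 1 else 0) ∧
      ¬ HasRainbowSpanningTrees (completeBipartiteGraph α β) c t := by
  obtain ⟨S, hS, hedges⟩ :=
    exists_edgesWithin_completeBipartiteGraph_eq (β := β) (show 2 ≤ Fintype.card α by omega)
  have hne : S.Nonempty := by
    rw [← card_pos]
    rw [Fintype.card_sum] at hS
    omega
  have hmul : Fintype.card α * Fintype.card β =
      (Fintype.card α - 2) * Fintype.card β + 2 * Fintype.card β := by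
    rw [← add_mul, Nat.sub_add_cancel (by omega)]
  obtain ⟨c, hc, hnot⟩ := exists_coloring_not_hasRainbowSpanningTrees_of_card_add_two_eq
    (G := completeBipartiteGraph α β) hne hS ht (by
      rw [hedges, card_edgeFinset_completeBipartiteGraph, hmul]
      split_ifs <;> omega)
  exact ⟨c, by rw [hc, hedges, add_right_comm], hnot⟩

end CompleteBipartite

/-- For `p ≥ q ≥ 2t + 1`, the anti-Ramsey number of `t`
edge-disjoint rainbow spanning trees in `K_{p,q}` is `(p-2)q + t + δ_{pq}`. -/
theorem stmt18 (p q t : ℕ) (ht : 0 < t) (hq : 2 * t + 1 ≤ q) (hpq : q ≤ p) :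
    antiRamsey (completeBipartiteGraph (Fin p) (Fin q)) t =
      (p - 2) * q + t + (if p = q then 1 else 0) := by
  have hgreatest : IsGreatest {m | ∃ c : Sym2 (Fin p ⊕ Fin q) → ℕ,
      #((completeBipartiteGraph (Fin p) (Fin q)).edgeFinset.image c) = m ∧
        ¬ HasRainbowSpanningTrees (completeBipartiteGraph (Fin p) (Fin q)) c t}
      ((p - 2) * q + t + if p = q then 1 else 0) := by
    constructor
    · simpa using exists_coloring_completeBipartiteGraph (α := Fin p) (β := Fin q) ht
        (by simpa using hq) (by simpa using hpq)
    · rintro _ ⟨c, rfl, hc⟩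
      refine not_lt.1 fun hlt ↦ hc ?_
      exact hasRainbowSpanningTrees_completeBipartiteGraph ht (by simpa using hq)
        (by simpa using hpq) (by simpa using hlt)
  exact hgreatest.csSup_eq
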